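/- For all integers m ≥ 1 and n ≥ 1, the integral ∫_{−1}^{1} P_m(x)² P_{n+1}(x) P_{n−1}(x) dx equals the integral ∫_{−1}^{1} P_n(x)² P_{m+1}(x) P_{m−1}(x) dx. -/

import Mathlib

/-!
Write `w = 1 - x²`, `u = P_m`, `v = P_n`, `a = w u'`, `b = w v'`, `M = m (m + 1)`, `N = n (n + 1)`.
The ladder relations `P_{n+1} = x v - b / (n + 1)` and `P_{n-1} = x v + b / n` give
`N P_{n+1} P_{n-1} = N x² v² + x v b - b²`, and likewise for `m`. Hence
`M N (u² P_{n+1} P_{n-1} - v² P_{m+1} P_{m-1}) = M u² (x v b - b²) - N v² (x u a - a²)`.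
By Legendre's equations `a' = -M u` and `b' = -N v`, the right-hand side is the derivative of
`(N w u a v² - M w u² v b - a² v b + u a b²) / 2`,
which vanishes at `x = ±1` because `w`, `a` and `b` do. So the two integrals agree.

The ladder relations and Legendre's equation are polynomial identities, obtained by applying
iterated derivatives to `((X² - 1)^(k+1))' = 2 (k + 1) X (X² - 1)^k` and to
`(X² - 1) ((X² - 1)^k)' = 2 k X (X² - 1)^k`.
-/

/-- Legendre polynomial of degree `n` (Rodrigues's formula), as a real function. -/
noncomputable def legendreP (n : ℕ) (x : ℝ) : ℝ :=
  (1 / ((2:ℝ)^n * n.factorial)) * iteratedDeriv n (fun y : ℝ => (y^2 - 1)^n) x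

open Polynomial in
/-- The Legendre polynomial as an element of `ℝ[X]`, given by Rodrigues's formula. -/
noncomputable def legPoly (k : ℕ) : ℝ[X] :=
  C (1 / ((2:ℝ)^k * k.factorial)) * derivative^[k] ((X^2 - 1)^k)

open Polynomial in
lemma iteratedDeriv_polynomial_eval (p : ℝ[X]) (k : ℕ) :
    iteratedDeriv k (fun x => p.eval x) = fun x => (derivative^[k] p).eval x := by
  induction k with
  | zero => simp
  | succ k ih =>
    rw [iteratedDeriv_succ, ih, Function.iterate_succ_apply']
    funext x
    exact Polynomial.deriv _

lemma legendreP_eq_eval (k : ℕ) (x : ℝ) : legendreP k x = (legPoly k).eval x := by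
  have h := congrFun (iteratedDeriv_polynomial_eval ((Polynomial.X^2 - 1)^k) k) x
  simp only [Polynomial.eval_pow, Polynomial.eval_sub, Polynomial.eval_X,
    Polynomial.eval_one] at h
  rw [legendreP, h, legPoly, Polynomial.eval_mul, Polynomial.eval_C]

open Polynomial in
/-- The `(k + 1)`-st derivative of `(X² - 1) V' = 2 (k + 1) X V`, where `V = (X² - 1)^(k+1)`,
expanded by Leibniz's rule; the terms in `D^(k+1) V` cancel. -/
lemma iterate_derivative_two_step (k : ℕ) :
    (X^2 - 1) * derivative^[k+2] (((X:ℝ[X])^2 - 1)^(k+1)) =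
      ((k:ℝ[X]) + 1) * ((k:ℝ[X]) + 2) * derivative^[k] ((X^2 - 1)^(k+1)) := by
  set V : ℝ[X] := (X^2 - 1)^(k+1) with hV
  have h0 : derivative V * X * X = derivative V + ((2 * (k+1) : ℕ) : ℝ[X]) * (V * X) := by
    rw [hV]
    simp [derivative_pow, map_ofNat]
    ring
  have h := congrArg (fun p => derivative^[k+1] p) h0
  beta_reduce at h
  rw [iterate_map_add] at h
  simp only [iterate_derivative_mul_X, iterate_derivative_natCast_mul,
    nsmul_eq_mul, Nat.add_sub_cancel] at h
  simp only [← Function.iterate_succ_apply] at h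
  push_cast at h
  have e : (k:ℝ[X]) * derivative^[k - 1 + 1] V = (k:ℝ[X]) * derivative^[k] V := by
    rcases k with _ | k
    · simp
    · rw [Nat.add_sub_cancel]
  simp only [Nat.succ_eq_add_one] at h
  linear_combination h - ((k:ℝ[X]) + 1) * e

open Polynomial in
/-- Rodrigues's recursion: expand `D^(k+1) (X² - 1)^(k+1) = D^k (2 (k + 1) X (X² - 1)^k)`. -/
lemma iterate_derivative_succ (k : ℕ) :
    derivative^[k+1] (((X:ℝ[X])^2 - 1)^(k+1)) =
      2 * ((k:ℝ[X]) + 1) * (X * derivative^[k] (((X:ℝ[X])^2 - 1)^k) +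
        (k:ℝ[X]) * derivative^[k-1] (((X:ℝ[X])^2 - 1)^k)) := by
  have h0 : derivative (((X:ℝ[X])^2 - 1)^(k+1)) =
      ((2 * (k+1) : ℕ) : ℝ[X]) * ((X^2 - 1)^k * X) := by
    simp [derivative_pow, map_ofNat]
    ring
  rw [Function.iterate_succ_apply, h0, iterate_derivative_natCast_mul, iterate_derivative_mul_X,
    nsmul_eq_mul]
  push_cast
  ring

open Polynomial in
/-- The derivative of `D^k (X² - 1)^k` expressed through its antiderivative; this is Legendre's
equation integrated once. The case `k = 0` holds because both sides vanish. -/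
lemma iterate_derivative_two_step' (k : ℕ) :
    (X^2 - 1) * derivative (derivative^[k] (((X:ℝ[X])^2 - 1)^k)) =
      (k:ℝ[X]) * ((k:ℝ[X]) + 1) * derivative^[k-1] ((X^2 - 1)^k) := by
  rcases k with _ | k
  · simp
  · have h := iterate_derivative_two_step k
    rw [Function.iterate_succ_apply'] at h
    rw [h, Nat.add_sub_cancel]
    push_cast
    ring

open Polynomial in
/-- Legendre's differential equation in self-adjoint form. -/
lemma legPoly_ode (k : ℕ) :
    derivative ((1 - X^2) * derivative (legPoly k)) = -((k:ℝ[X]) * ((k:ℝ[X]) + 1)) * legPoly k := by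
  have h := congrArg derivative (iterate_derivative_two_step' k)
  have e : (k:ℝ[X]) * derivative (derivative^[k-1] (((X:ℝ[X])^2 - 1)^k)) =
      (k:ℝ[X]) * derivative^[k] (((X:ℝ[X])^2 - 1)^k) := by
    rcases k with _ | k
    · simp
    · rw [Nat.add_sub_cancel, ← Function.iterate_succ_apply' derivative]
  rw [legPoly]
  generalize derivative^[k] (((X:ℝ[X])^2 - 1)^k) = R at *
  generalize derivative^[k-1] (((X:ℝ[X])^2 - 1)^k) = S at *
  simp [derivative_mul, -one_div, -mul_inv_rev, -map_mul] at h ⊢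
  linear_combination -C (1 / ((2:ℝ)^k * k.factorial)) * (h + ((k:ℝ[X]) + 1) * e)

open Polynomial in
/-- The raising relation: `iterate_derivative_succ` with `D^(k-1) (X² - 1)^k` eliminated by
`iterate_derivative_two_step'`. -/
lemma legPoly_succ (k : ℕ) :
    ((k:ℝ[X]) + 1) * legPoly (k+1) =
      ((k:ℝ[X]) + 1) * X * legPoly k - (1 - X^2) * derivative (legPoly k) := by
  have h := iterate_derivative_two_step' k
  have h1 := iterate_derivative_succ k
  have hc : C (1 / ((2:ℝ)^k * k.factorial)) =
      2 * ((k:ℝ[X]) + 1) * C (1 / ((2:ℝ)^(k+1) * (k+1).factorial)) := by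
    rw [show 2 * ((k:ℝ[X]) + 1) = C (2 * ((k:ℝ) + 1)) by simp [C_mul, map_ofNat], ← C_mul]
    congr 1
    rw [Nat.factorial_succ]
    push_cast
    have := Nat.factorial_ne_zero k
    have : (k:ℝ) + 1 ≠ 0 := by positivity
    field_simp
    ring
  rw [legPoly, legPoly, h1, derivative_C_mul, hc]
  generalize derivative^[k] (((X:ℝ[X])^2 - 1)^k) = R at *
  generalize derivative^[k-1] (((X:ℝ[X])^2 - 1)^k) = S at *
  generalize C (1 / ((2:ℝ)^(k+1) * (k+1).factorial)) = c at *
  linear_combination (-2 * ((k:ℝ[X]) + 1) * c) * h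

open Polynomial in
/-- The lowering relation, obtained by eliminating `P_{k+1}'` between the derivative of the raising
relation and Legendre's equation. -/
lemma legPoly_pred (k : ℕ) :
    ((k:ℝ[X]) + 1) * legPoly k =
      ((k:ℝ[X]) + 1) * X * legPoly (k+1) + (1 - X^2) * derivative (legPoly (k+1)) := by
  have h := legPoly_succ k
  have hd := congrArg derivative h
  have ho := legPoly_ode k
  have hk : (k:ℝ[X]) + 1 ≠ 0 := by exact_mod_cast Nat.succ_ne_zero k
  apply mul_left_cancel₀ hk
  rw [derivative_sub, ho] at hd
  simp only [derivative_mul, derivative_add, derivative_natCast, derivative_one,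
    derivative_X] at hd
  linear_combination -((k:ℝ[X]) + 1) * X * h - (1 - X^2) * hd

open Polynomial in
/-- The product of the two neighbours of `P_{k+1}` in terms of `P_{k+1}` and its derivative. -/
lemma legPoly_neighbours (k : ℕ) :
    ((k:ℝ[X]) + 1) * ((k:ℝ[X]) + 2) * (legPoly (k+2) * legPoly k) =
      ((k:ℝ[X]) + 1) * ((k:ℝ[X]) + 2) * X^2 * legPoly (k+1)^2
      + X * legPoly (k+1) * ((1 - X^2) * derivative (legPoly (k+1)))
      - ((1 - X^2) * derivative (legPoly (k+1)))^2 := by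
  have h1 := legPoly_succ (k+1)
  have h2 := legPoly_pred k
  push_cast at h1
  linear_combination ((k:ℝ[X]) + 1) * legPoly k * h1 +
    (((k:ℝ[X]) + 1 + 1) * X * legPoly (k+1) - (1 - X^2) * derivative (legPoly (k+1))) * h2

open Polynomial in
/-- Twice the polynomial `(N w u a v² - M w u² v b - a² v b + u a b²) / 2` with
`w = 1 - X²`, `u = P_m`, `v = P_n`, `a = w u'`, `b = w v'`, `M = m (m + 1)`, `N = n (n + 1)`. -/
noncomputable def legPrimitive (m n : ℕ) : ℝ[X] :=
  let w : ℝ[X] := 1 - X^2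
  let u := legPoly m
  let v := legPoly n
  let a := w * derivative u
  let b := w * derivative v
  (n:ℝ[X]) * ((n:ℝ[X]) + 1) * w * u * a * v^2 - (m:ℝ[X]) * ((m:ℝ[X]) + 1) * w * u^2 * v * b
    - a^2 * v * b + u * a * b^2

open Polynomial in
lemma derivative_legPrimitive (m n : ℕ) :
    derivative (legPrimitive (m+1) (n+1)) =
      2 * (((m:ℝ[X]) + 1) * ((m:ℝ[X]) + 2)) * (((n:ℝ[X]) + 1) * ((n:ℝ[X]) + 2)) *
        (legPoly (m+1)^2 * legPoly (n+2) * legPoly n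
          - legPoly (n+1)^2 * legPoly (m+2) * legPoly m) := by
  have hm := legPoly_neighbours m
  have hn := legPoly_neighbours n
  have om := legPoly_ode (m+1)
  have on := legPoly_ode (n+1)
  -- `a` and `b` are kept opaque so that their derivatives are rewritten by Legendre's equation.
  obtain ⟨a, ha⟩ : ∃ a, a = (1 - X^2) * derivative (legPoly (m+1)) := ⟨_, rfl⟩
  obtain ⟨b, hb⟩ : ∃ b, b = (1 - X^2) * derivative (legPoly (n+1)) := ⟨_, rfl⟩
  simp only [legPrimitive]
  rw [← ha] at hm om ⊢
  rw [← hb] at hn on ⊢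
  simp only [derivative_mul, derivative_sub, derivative_add, derivative_pow, derivative_X,
    derivative_one, derivative_natCast, om, on]
  push_cast
  simp only [map_ofNat, pow_one]
  generalize derivative (legPoly (m+1)) = u' at *
  generalize derivative (legPoly (n+1)) = v' at *
  generalize legPoly (m+1) = u at *
  generalize legPoly (n+1) = v at *
  subst ha hb
  linear_combination (-2 * (((m:ℝ[X]) + 1) * (m + 2)) * u^2) * hn +
    (2 * (((n:ℝ[X]) + 1) * (n + 2)) * v^2) * hm

theorem integral_legendreP_symm (m n : ℕ) (hm : 1 ≤ m) (hn : 1 ≤ n) :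
    (∫ x in (-1:ℝ)..1, (legendreP m x)^2 * legendreP (n+1) x * legendreP (n-1) x) =
    ∫ x in (-1:ℝ)..1, (legendreP n x)^2 * legendreP (m+1) x * legendreP (m-1) x := by
  obtain ⟨m, rfl⟩ := Nat.exists_eq_add_of_le' hm
  obtain ⟨n, rfl⟩ := Nat.exists_eq_add_of_le' hn
  simp only [legendreP_eq_eval, Nat.add_sub_cancel, add_assoc, Nat.reduceAdd]
  set p := legPoly (m+1)^2 * legPoly (n+2) * legPoly n with hp
  set q := legPoly (n+1)^2 * legPoly (m+2) * legPoly m with hq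
  have key : ∫ x in (-1:ℝ)..1, (Polynomial.derivative (legPrimitive (m+1) (n+1))).eval x = 0 := by
    rw [intervalIntegral.integral_eq_sub_of_hasDerivAt
      (fun x _ => Polynomial.hasDerivAt (legPrimitive (m+1) (n+1)) x)
      ((Polynomial.continuous _).intervalIntegrable _ _)]
    simp [legPrimitive]
  rw [derivative_legPrimitive] at key
  simp only [Polynomial.eval_mul, Polynomial.eval_sub, Polynomial.eval_add, Polynomial.eval_pow,
    Polynomial.eval_natCast, Polynomial.eval_one, Polynomial.eval_ofNat,
    intervalIntegral.integral_const_mul] at key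
  rw [intervalIntegral.integral_sub] at key
  · have hc : 2 * (((m:ℝ) + 1) * (m + 2)) * ((n + 1) * (n + 2)) ≠ 0 := by positivity
    exact sub_eq_zero.mp ((mul_eq_zero.mp key).resolve_left hc)
  · exact Continuous.intervalIntegrable (by fun_prop) _ _
  · exact Continuous.intervalIntegrable (by fun_prop) _ _
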